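/- Assume α ≥ 1, λ is nondecreasing on [t₀,∞), b(t) > β'(t) + β(t)/t (equivalently w(t) > 0) for every t ≥ t₀, (α−3)·w(t) − t·w'(t) ≥ 0 for every t ≥ t₀, and β(t)/(t·w(t)) → 0 as t → +∞. Then t·β(t)·(Φ_{λ(t)}(x(t)) − Φ*) → 0 as t → +∞. -/

import Mathlib

open Set MeasureTheory Filter Real

noncomputable section

/-- Convexity for extended-real-valued functions. -/
def EConvexOn {H : Type*} [NormedAddCommGroup H] [NormedSpace ℝ H] (f : H → EReal) : Prop :=
  ∀ x y : H, ∀ a c : ℝ, 0 ≤ a → 0 ≤ c → a + c = 1 →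
    f (a • x + c • y) ≤ (a : EReal) * f x + (c : EReal) * f y

/-- `p` is the proximal point of `f` with parameter `l` at `x`, i.e. the (unique) minimizer of
`y ↦ f y + ‖x - y‖² / (2l)`. -/
def IsProxPt {H : Type*} [NormedAddCommGroup H] [InnerProductSpace ℝ H]
    (f : H → EReal) (l : ℝ) (x p : H) : Prop :=
  ∀ y : H, f p + ((‖x - p‖ ^ 2 / (2 * l) : ℝ) : EReal)
      ≤ f y + ((‖x - y‖ ^ 2 / (2 * l) : ℝ) : EReal)

/-- The Moreau envelope of `f` with parameter `l` (as a real number). -/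
def moreau {H : Type*} [NormedAddCommGroup H] [InnerProductSpace ℝ H]
    (f : H → EReal) (l : ℝ) (x : H) : ℝ :=
  (⨅ y : H, f y + ((‖x - y‖ ^ 2 / (2 * l) : ℝ) : EReal)).toReal

theorem aux_squeeze {l f u : ℝ → ℝ} {d t : ℝ} (hl : HasDerivAt l d t) (hu : HasDerivAt u d t)
    (h1 : ∀ᶠ s in nhds t, l s ≤ f s) (h2 : ∀ᶠ s in nhds t, f s ≤ u s)
    (e1 : l t = f t) (e2 : u t = f t) : HasDerivAt f d t := by
  rw [hasDerivAt_iff_isLittleO] at hl hu ⊢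
  have h := hl.norm_left.add hu.norm_left
  refine (Asymptotics.IsBigO.of_bound 1 ?_).trans_isLittleO h
  filter_upwards [h1, h2] with s h1 h2
  simp only [Real.norm_eq_abs, smul_eq_mul, e1, e2, one_mul]
  rw [abs_of_nonneg (a := _ + _) (by positivity)]
  have a1 := neg_abs_le (l s - f t - (s - t) * d)
  have a2 := le_abs_self (u s - f t - (s - t) * d)
  have a3 := abs_nonneg (l s - f t - (s - t) * d)
  have a4 := abs_nonneg (u s - f t - (s - t) * d)
  exact abs_le.2 ⟨by linarith, by linarith⟩

section
variable {H : Type*} [NormedAddCommGroup H] [InnerProductSpace ℝ H]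

theorem aux_prox_ne_top {Φ : H → EReal} {l : ℝ} {x p z : H} (h : IsProxPt Φ l x p)
    (hz : Φ z ≠ ⊤) : Φ p ≠ ⊤ := by
  intro hp
  have := h z
  rw [hp, EReal.top_add_coe, top_le_iff] at this
  exact (EReal.add_lt_top hz (EReal.coe_ne_top _)).ne this

theorem aux_prox_real {Φ : H → EReal} {l : ℝ} {x p y : H} (h : IsProxPt Φ l x p)
    (hb : ∀ y, Φ y ≠ ⊥) (hy : Φ y ≠ ⊤) :
    (Φ p).toReal + ‖x - p‖ ^ 2 / (2 * l) ≤ (Φ y).toReal + ‖x - y‖ ^ 2 / (2 * l) := by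
  have h1 := h y
  rw [← EReal.coe_toReal (aux_prox_ne_top h hy) (hb p), ← EReal.coe_toReal hy (hb y)] at h1
  exact_mod_cast h1

theorem aux_moreau {Φ : H → EReal} {l : ℝ} {x p z : H} (h : IsProxPt Φ l x p)
    (hb : ∀ y, Φ y ≠ ⊥) (hz : Φ z ≠ ⊤) :
    moreau Φ l x = (Φ p).toReal + ‖x - p‖ ^ 2 / (2 * l) := by
  have : (⨅ y : H, Φ y + ((‖x - y‖ ^ 2 / (2 * l) : ℝ) : EReal))
      = Φ p + ((‖x - p‖ ^ 2 / (2 * l) : ℝ) : EReal) :=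
    le_antisymm (iInf_le _ p) (le_iInf h)
  rw [moreau, this, EReal.toReal_add (aux_prox_ne_top h hz) (hb p) (EReal.coe_ne_top _)
    (EReal.coe_ne_bot _), EReal.toReal_coe]

theorem aux_subgrad {Φ : H → EReal} {l : ℝ} {x p z : H} (hl : 0 < l) (h : IsProxPt Φ l x p)
    (hc : EConvexOn Φ) (hb : ∀ y, Φ y ≠ ⊥) (hz : Φ z ≠ ⊤) :
    (Φ p).toReal - (Φ z).toReal ≤ l⁻¹ * inner ℝ (x - p) (p - z) := by
  have hp := aux_prox_ne_top h hz
  have key : ∀ a : ℝ, 0 < a → a ≤ 1 → (Φ p).toReal - (Φ z).toReal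
      ≤ l⁻¹ * inner ℝ (x - p) (p - z) + a * (‖p - z‖ ^ 2 / (2 * l)) := by
    intro a ha ha1
    have h1 := hc p z (1 - a) a (by linarith) ha.le (by ring)
    rw [← EReal.coe_toReal hp (hb p), ← EReal.coe_toReal hz (hb z)] at h1
    have hy : Φ ((1 - a) • p + a • z) ≠ ⊤ := by
      intro hy
      rw [hy] at h1
      have : ((((1 - a) * (Φ p).toReal + a * (Φ z).toReal : ℝ)) : EReal) = ⊤ := by
        rw [← top_le_iff]; exact_mod_cast h1
      exact EReal.coe_ne_top _ this
    rw [← EReal.coe_toReal hy (hb _)] at h1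
    have h2 : (Φ ((1 - a) • p + a • z)).toReal ≤ (1 - a) * (Φ p).toReal + a * (Φ z).toReal := by
      exact_mod_cast h1
    have h3 := aux_prox_real h hb hy
    have e : x - ((1 - a) • p + a • z) = (x - p) + a • (p - z) := by
      module
    rw [e, norm_add_sq_real, inner_smul_right, norm_smul, Real.norm_of_nonneg ha.le] at h3
    have h4 : a * ((Φ p).toReal - (Φ z).toReal)
      ≤ a * (l⁻¹ * inner ℝ (x - p) (p - z) + a * (‖p - z‖ ^ 2 / (2 * l))) := by
      have : (‖x - p‖ ^ 2 + 2 * (a * inner ℝ (x - p) (p - z)) + (a * ‖p - z‖) ^ 2) / (2 * l)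
        = ‖x - p‖ ^ 2 / (2 * l) + a * (l⁻¹ * inner ℝ (x - p) (p - z)
          + a * (‖p - z‖ ^ 2 / (2 * l))) := by
        field_simp
        ring
      rw [this] at h3
      linarith
    exact le_of_mul_le_mul_left h4 ha
  have ht : Tendsto (fun a : ℝ => l⁻¹ * inner ℝ (x - p) (p - z) + a * (‖p - z‖ ^ 2 / (2 * l)))
      (nhdsWithin 0 (Ioi 0)) (nhds (l⁻¹ * inner ℝ (x - p) (p - z) + 0 * (‖p - z‖ ^ 2 / (2 * l)))) := by
    apply Tendsto.mono_left _ nhdsWithin_le_nhds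
    apply Continuous.tendsto (f := fun a : ℝ => l⁻¹ * inner ℝ (x - p) (p - z) + a * (‖p - z‖ ^ 2 / (2 * l)))
    fun_prop
  have := ge_of_tendsto ht (b := (Φ p).toReal - (Φ z).toReal) (by
    filter_upwards [Ioc_mem_nhdsGT (show (0:ℝ) < 1 by norm_num)] with a ha
    exact key a ha.1 ha.2)
  simpa using this

theorem aux_deriv {Φ : H → EReal} {t₀ t lt' : ℝ} {lam : ℝ → ℝ} {x p : ℝ → H} {z vt pt' : H}
    (hb : ∀ y, Φ y ≠ ⊥) (hz : Φ z ≠ ⊤)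
    (hlam : ∀ t ≥ t₀, 0 < lam t) (hp : ∀ t ≥ t₀, IsProxPt Φ (lam t) (x t) (p t)) (ht : t₀ < t)
    (hl' : HasDerivAt lam lt' t) (hx' : HasDerivAt x vt t) (hp' : HasDerivAt p pt' t) :
    HasDerivAt (fun s => (Φ (p s)).toReal + ‖x s - p s‖ ^ 2 / (2 * lam s))
      ((lam t)⁻¹ * inner ℝ (x t - p t) vt - lt' / 2 * ‖(lam t)⁻¹ • (x t - p t)‖ ^ 2) t := by
  have hlt := hlam t ht.le
  have hnh : ∀ᶠ s in nhds t, t₀ < s := lt_mem_nhds ht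
  refine aux_squeeze
    (l := fun s => (Φ (p t)).toReal + ‖x t - p t‖ ^ 2 / (2 * lam t)
      + (‖x s - p s‖ ^ 2 / (2 * lam s) - ‖x t - p s‖ ^ 2 / (2 * lam t)))
    (u := fun s => (Φ (p t)).toReal + ‖x s - p t‖ ^ 2 / (2 * lam s)) ?_ ?_ ?_ ?_ ?_ ?_
  · have h1 := ((hx'.sub hp').norm_sq.div (hl'.const_mul 2) (by positivity)).sub
      ((((hasDerivAt_const t (x t)).sub hp').norm_sq).div_const (2 * lam t))
    have h2 := h1.const_add ((Φ (p t)).toReal + ‖x t - p t‖ ^ 2 / (2 * lam t))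
    refine h2.congr_deriv ?_
    simp only [Pi.sub_apply, norm_smul, norm_inv, Real.norm_of_nonneg hlt.le, inner_sub_right, zero_sub, inner_neg_right, mul_pow]
    field_simp
    ring
  · have h1 := ((hx'.sub (hasDerivAt_const t (p t))).norm_sq.div (hl'.const_mul 2) (by positivity))
    have h2 := h1.const_add ((Φ (p t)).toReal)
    refine h2.congr_deriv ?_
    simp only [Pi.sub_apply, norm_smul, norm_inv, Real.norm_of_nonneg hlt.le, sub_zero, mul_pow]
    field_simp
  · filter_upwards [hnh] with s hs
    have := aux_prox_real (hp t ht.le) hb (aux_prox_ne_top (hp s hs.le) hz)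
    linarith
  · filter_upwards [hnh] with s hs
    exact aux_prox_real (hp s hs.le) hb (aux_prox_ne_top (hp t ht.le) hz)
  · simp
  · simp

end

theorem beta_weighted_moreau_values_tendsto_zero
    {H : Type*} [NormedAddCommGroup H] [InnerProductSpace ℝ H] [CompleteSpace H]
    (Φ : H → EReal)
    (hΦbot : ∀ y, Φ y ≠ ⊥) (hΦproper : ∃ y, Φ y ≠ ⊤)
    (hΦconv : EConvexOn Φ) (hΦlsc : LowerSemicontinuous Φ)
    (t₀ α : ℝ) (ht₀ : 0 < t₀)
    (β b lam β' b' lam' w' : ℝ → ℝ)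
    (hβnonneg : ∀ t ≥ t₀, 0 ≤ β t)
    (hbpos : ∀ t ≥ t₀, 0 < b t)
    (hlampos : ∀ t ≥ t₀, 0 < lam t)
    (hβ' : ∀ t ≥ t₀, HasDerivAt β (β' t) t)
    (hb' : ∀ t ≥ t₀, HasDerivAt b (b' t) t)
    (hlam' : ∀ t ≥ t₀, HasDerivAt lam (lam' t) t)
    (hw' : ∀ t ≥ t₀, HasDerivAt (fun s => b s - β' s - β s / s) (w' t) t)
    (x v acc p G' : ℝ → H)
    (hx : ∀ t ≥ t₀, HasDerivAt x (v t) t)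
    (hv : ∀ t ≥ t₀, HasDerivAt v (acc t) t)
    (hp : ∀ t ≥ t₀, IsProxPt Φ (lam t) (x t) (p t))
    (hG' : ∀ t ≥ t₀, HasDerivAt (fun s => (lam s)⁻¹ • (x s - p s)) (G' t) t)
    (hode : ∀ t ≥ t₀, acc t + (α / t) • v t + β t • G' t
        + b t • ((lam t)⁻¹ • (x t - p t)) = 0)
    (hα : 1 ≤ α)
    (hlammono : MonotoneOn lam (Set.Ici t₀))
    (hw : ∀ t ≥ t₀, β' t + β t / t < b t)
    (hAs1 : ∀ t ≥ t₀, 0 ≤ (α - 3) * (b t - β' t - β t / t) - t * w' t)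
    (hβw : Filter.Tendsto (fun t => β t / (t * (b t - β' t - β t / t)))
      Filter.atTop (nhds 0))
    (z : H) (hz : ∀ y, Φ z ≤ Φ y)
    :
    Filter.Tendsto (fun t => t * β t * (moreau Φ (lam t) (x t) - (Φ z).toReal))
      Filter.atTop (nhds 0) := by
  have hzt : Φ z ≠ ⊤ := by
    obtain ⟨y, hy⟩ := hΦproper
    exact ((hz y).trans_lt (lt_top_iff_ne_top.2 hy)).ne
  set w : ℝ → ℝ := fun s => b s - β' s - β s / s with hwdef
  have hwpos : ∀ t ≥ t₀, 0 < w t := fun t ht => by have := hw t ht; simp only [hwdef]; linarith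
  set G : ℝ → H := fun s => (lam s)⁻¹ • (x s - p s) with hGdef
  set f : ℝ → ℝ := fun s => (Φ (p s)).toReal + ‖x s - p s‖ ^ 2 / (2 * lam s) - (Φ z).toReal
    with hfdef
  have hf0 : ∀ t ≥ t₀, 0 ≤ f t := by
    intro t ht
    have h1 : (Φ z).toReal ≤ (Φ (p t)).toReal :=
      EReal.toReal_le_toReal (hz _) (hΦbot z) (aux_prox_ne_top (hp t ht) hzt)
    have h2 : 0 ≤ ‖x t - p t‖ ^ 2 / (2 * lam t) := by have := hlampos t ht; positivity
    simp only [hfdef]; linarith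
  have hfG : ∀ t ≥ t₀, f t ≤ inner ℝ (G t) (x t - z) := by
    intro t ht
    have hl := hlampos t ht
    have h1 := aux_subgrad hl (hp t ht) hΦconv hΦbot hzt
    have e : x t - z = (x t - p t) + (p t - z) := by abel
    simp only [hGdef, hfdef]
    rw [e, inner_add_right, inner_smul_left, inner_smul_left, real_inner_self_eq_norm_sq]
    simp only [conj_trivial]
    have h3 : ‖x t - p t‖ ^ 2 / (2 * lam t) ≤ (lam t)⁻¹ * ‖x t - p t‖ ^ 2 := by
      have : ‖x t - p t‖ ^ 2 / (2 * lam t) = (lam t)⁻¹ * ‖x t - p t‖ ^ 2 / 2 := by field_simp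
      have : 0 ≤ (lam t)⁻¹ * ‖x t - p t‖ ^ 2 := by positivity
      linarith
    linarith
  have hf' : ∀ t > t₀, HasDerivAt f (inner ℝ (G t) (v t) - lam' t / 2 * ‖G t‖ ^ 2) t := by
    intro t ht
    have hp' : DifferentiableAt ℝ p t := by
      have h1 := ((hx t ht.le).sub ((hlam' t ht.le).smul (hG' t ht.le))).differentiableAt
      refine h1.congr_of_eventuallyEq ?_
      filter_upwards [lt_mem_nhds ht] with s hs
      have := (hlampos s hs.le).ne'
      simp [hGdef, smul_smul, this]
    have h := (aux_deriv hΦbot hzt hlampos hp ht (hlam' t ht.le) (hx t ht.le)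
      hp'.hasDerivAt).sub_const (Φ z).toReal
    refine h.congr_deriv ?_
    simp only [hGdef, inner_smul_left, conj_trivial]
  have hlam0 : ∀ t > t₀, 0 ≤ lam' t := by
    intro t ht
    have h1 : derivWithin lam (Ici t₀) t = lam' t :=
      (hlam' t ht.le).hasDerivWithinAt.derivWithin (uniqueDiffOn_Ici t₀ t ht.le)
    rw [← h1]
    exact hlammono.derivWithin_nonneg
  set u : ℝ → H := fun s => (α - 1) • (x s - z) + s • (v s + β s • G s) with hudef
  have hu' : ∀ t > t₀, HasDerivAt u (-(t * w t) • G t) t := by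
    intro t ht
    have ht0 : t ≠ 0 := (ht₀.trans ht).ne'
    have h1 := (((hx t ht.le).sub_const z).const_smul (α - 1)).add
      ((hasDerivAt_id t).smul ((hv t ht.le).add ((hβ' t ht.le).smul (hG' t ht.le))))
    refine h1.congr_deriv ?_
    have h2 := hode t ht.le
    have h3 : acc t = -((α / t) • v t + β t • G' t + b t • G t) := by
      rw [← sub_eq_zero, ← h2]; simp only [hGdef]; abel
    simp only [id, Pi.add_apply, Pi.smul_apply', h3, hwdef]
    match_scalars <;> field_simp <;> ring
  set E : ℝ → ℝ := fun s => s ^ 2 * w s * f s + ‖u s‖ ^ 2 / 2 with hEdef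
  have hE' : ∀ t > t₀, ∃ d ≤ 0, HasDerivAt E d t := by
    intro t ht
    have htp : 0 < t := ht₀.trans ht
    have h1 := ((((hasDerivAt_pow 2 t)).mul (hw' t ht.le)).mul (hf' t ht)).add
      ((hu' t ht).norm_sq.div_const 2)
    refine ⟨_, ?_, h1⟩
    have i1 : inner ℝ (u t) (-(t * w t) • G t)
      = -(t * w t) * ((α - 1) * inner ℝ (G t) (x t - z)
        + t * (inner ℝ (G t) (v t) + β t * ‖G t‖ ^ 2)) := by
      rw [real_inner_comm, inner_smul_left]
      simp only [hudef, inner_add_right, inner_smul_right, real_inner_self_eq_norm_sq, conj_trivial]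
    rw [i1]
    have hA := hAs1 t ht.le
    change 0 ≤ (α - 3) * w t - t * w' t at hA
    have hwt := hwpos t ht.le
    have c1 : 0 ≤ t * w t * (α - 1) * (inner ℝ (G t) (x t - z) - f t) :=
      mul_nonneg (mul_nonneg (by positivity) (by linarith)) (by linarith [hfG t ht.le])
    have c2 : 0 ≤ t * ((α - 3) * w t - t * w' t) * f t :=
      mul_nonneg (mul_nonneg htp.le hA) (hf0 t ht.le)
    have c3 : 0 ≤ t ^ 2 * w t * (lam' t / 2 * ‖G t‖ ^ 2) := by
      have := hlam0 t ht; positivity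
    have c4 : 0 ≤ t ^ 2 * w t * (β t * ‖G t‖ ^ 2) := by
      have := hβnonneg t ht.le; positivity
    change ((_ : ℝ) * t ^ (2 - 1) * w t + t ^ 2 * w' t) * f t + t ^ 2 * w t * _ + _ ≤ 0
    norm_num
    nlinarith
  have hanti : AntitoneOn E (Ici (t₀ + 1)) := by
    have hmem : ∀ t ∈ Ici (t₀ + 1), t > t₀ := fun t ht => by
      have : t₀ + 1 ≤ t := ht
      linarith
    refine antitoneOn_of_deriv_nonpos (convex_Ici _) ?_ ?_ ?_
    · intro t ht
      obtain ⟨d, _, h⟩ := hE' t (hmem t ht)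
      exact h.continuousAt.continuousWithinAt
    · intro t ht
      obtain ⟨d, _, h⟩ := hE' t (hmem t (interior_subset ht))
      exact h.differentiableAt.differentiableWithinAt
    · intro t ht
      obtain ⟨d, hd, h⟩ := hE' t (hmem t (interior_subset ht))
      rw [h.deriv]; exact hd
  have hlim : Tendsto (fun t => β t / (t * w t) * E (t₀ + 1)) atTop (nhds 0) := by
    simpa using hβw.mul_const (E (t₀ + 1))
  refine tendsto_of_tendsto_of_tendsto_of_le_of_le' tendsto_const_nhds hlim ?_ ?_
  · filter_upwards [eventually_ge_atTop t₀] with t ht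
    rw [aux_moreau (hp t ht) hΦbot hzt]
    have := hf0 t ht
    have h1 := hβnonneg t ht
    have h2 : 0 < t := lt_of_lt_of_le ht₀ ht
    change 0 ≤ t * β t * f t
    positivity
  · filter_upwards [eventually_ge_atTop (t₀ + 1)] with t ht
    have ht' : t₀ ≤ t := by linarith
    rw [aux_moreau (hp t ht') hΦbot hzt]
    have h1 := hβnonneg t ht'
    have h2 : 0 < t := lt_of_lt_of_le ht₀ ht'
    have h3 := hwpos t ht'
    change t * β t * f t ≤ _
    have h4 : t ^ 2 * w t * f t ≤ E (t₀ + 1) := by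
      have h5 := hanti (mem_Ici.2 le_rfl) (mem_Ici.2 ht) ht
      have h6 : 0 ≤ ‖u t‖ ^ 2 / 2 := by positivity
      have h7 : E t = t ^ 2 * w t * f t + ‖u t‖ ^ 2 / 2 := rfl
      linarith
    calc t * β t * f t = β t / (t * w t) * (t ^ 2 * w t * f t) := by field_simp
      _ ≤ _ := mul_le_mul_of_nonneg_left h4 (by positivity)
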